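/- Criterion for the (2,5)-cuspidal edge: let f be a generalized timelike minimal surface with real Weierstrass data (g1, g2, ω1 du, ω2 dv) and let p be a non-degenerate ω-singular point with rank(df_p) = 1 and ω2(p) = 0 (so ω1(p) ≠ 0, (ω2)_v(p) ≠ 0 and g1(p)g2(p) ≠ 1). If f is not a front at p (equivalently (g2)_v(p) = 0), then f is A-equivalent at p to the (2,5)-cuspidal edge f_CE^{(2,5)}(u,v) = (u, v^2, v^5) at the origin if and only if the derivative of the function v ↦ (g2)_{vv}/(ω2)_v is nonzero at p, i.e. ((g2)_{vv}/(ω2)_v)_v(p) ≠ 0. -/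

import Mathlib

noncomputable section

open Real Filter

abbrev R2 : Type := ℝ × ℝ
abbrev R3 : Type := ℝ × ℝ × ℝ

/-- The partial derivative in the `u`-direction. -/
def pu (f : R2 → R3) (p : R2) : R3 := fderiv ℝ f p (1, 0)
/-- The partial derivative in the `v`-direction. -/
def pv (f : R2 → R3) (p : R2) : R3 := fderiv ℝ f p (0, 1)

/-- Determinant of three column vectors in ℝ³. -/
def det3 (a b c : R3) : ℝ :=
  a.1 * (b.2.1 * c.2.2 - b.2.2 * c.2.1)
  - b.1 * (a.2.1 * c.2.2 - a.2.2 * c.2.1)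
  + c.1 * (a.2.1 * b.2.2 - a.2.2 * b.2.1)

/-- Determinant of two vectors in ℝ². -/
def det2 (a b : R2) : ℝ := a.1 * b.2 - a.2 * b.1

/-- Euclidean inner product on ℝ³. -/
def ip3 (a b : R3) : ℝ := a.1 * b.1 + a.2.1 * b.2.1 + a.2.2 * b.2.2

/-- `f : ℝ² → ℝ³ = 𝕃³` is the generalized timelike minimal surface with real Weierstrass
data `(g1, g2, w1 du, w2 dv)`: it is smooth, its partial derivatives are
`f_u = (ω1/2)·(-1-g1², 1-g1², 2g1)` and `f_v = (ω2/2)·(1+g2², 1-g2², -2g2)`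
(which encodes the Weierstrass-type integral representation), and it is an immersion
on an open dense set. -/
structure IsGTMS (f : R2 → R3) (g1 g2 w1 w2 : ℝ → ℝ) : Prop where
  smooth_f : ContDiff ℝ (⊤ : ℕ∞) f
  smooth_g1 : ContDiff ℝ (⊤ : ℕ∞) g1
  smooth_g2 : ContDiff ℝ (⊤ : ℕ∞) g2
  smooth_w1 : ContDiff ℝ (⊤ : ℕ∞) w1
  smooth_w2 : ContDiff ℝ (⊤ : ℕ∞) w2
  deriv_u : ∀ p : R2, pu f p =
    ((-1 - g1 p.1 ^ 2) * w1 p.1 / 2, (1 - g1 p.1 ^ 2) * w1 p.1 / 2, g1 p.1 * w1 p.1)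
  deriv_v : ∀ p : R2, pv f p =
    ((1 + g2 p.2 ^ 2) * w2 p.2 / 2, (1 - g2 p.2 ^ 2) * w2 p.2 / 2, -(g2 p.2 * w2 p.2))
  dense_immersion : Dense {p : R2 | Function.Injective (fderiv ℝ f p)}

/-- `Φ` is a germ of diffeomorphism at `p`. -/
def IsLocalDiffeoAt {E F : Type*} [NormedAddCommGroup E] [NormedSpace ℝ E]
    [NormedAddCommGroup F] [NormedSpace ℝ F] (Φ : E → F) (p : E) : Prop :=
  ∃ (U : Set E) (V : Set F) (Φinv : F → E),
    IsOpen U ∧ p ∈ U ∧ IsOpen V ∧ Φ p ∈ V ∧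
    ContDiffOn ℝ (⊤ : ℕ∞) Φ U ∧ ContDiffOn ℝ (⊤ : ℕ∞) Φinv V ∧
    Set.MapsTo Φ U V ∧ Set.MapsTo Φinv V U ∧
    (∀ x ∈ U, Φinv (Φ x) = x) ∧ (∀ y ∈ V, Φ (Φinv y) = y)

/-- 𝒜-equivalence of the germ of `f1` at `p1` and the germ of `f2` at `p2`. -/
def AEquiv (f1 : R2 → R3) (p1 : R2) (f2 : R2 → R3) (p2 : R2) : Prop :=
  ∃ (Φ : R2 → R2) (Ψ : R3 → R3),
    IsLocalDiffeoAt Φ p1 ∧ Φ p1 = p2 ∧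
    IsLocalDiffeoAt Ψ (f1 p1) ∧ Ψ (f1 p1) = f2 p2 ∧
    ∀ᶠ x in nhds p1, Ψ (f1 x) = f2 (Φ x)

/-- The canonical unit normal of a generalized timelike minimal surface. -/
def gtmsNormal (g1 g2 : ℝ → ℝ) (p : R2) : R3 :=
  (Real.sqrt ((1 - g1 p.1 * g2 p.2) ^ 2 + 2 * (g1 p.1 + g2 p.2) ^ 2))⁻¹ •
    (g1 p.1 + g2 p.2, -g1 p.1 + g2 p.2, 1 + g1 p.1 * g2 p.2)

/-- The signed area density function `λ = det(f_u, f_v, n)`. -/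
def areaDensity (f : R2 → R3) (g1 g2 : ℝ → ℝ) (p : R2) : ℝ :=
  det3 (pu f p) (pv f p) (gtmsNormal g1 g2 p)

/-- `f` is a front at `p`: the Legendrian lift `(f, n)` is an immersion at `p`,
where `n` is the canonical unit normal. -/
def IsFrontAt (f : R2 → R3) (g1 g2 : ℝ → ℝ) (p : R2) : Prop :=
  Function.Injective (fderiv ℝ (fun q => (f q, gtmsNormal g1 g2 q)) p)

/-- The differential of `f` at `p` has rank one. -/
def RankOne (f : R2 → R3) (p : R2) : Prop :=
  LinearMap.rank (fderiv ℝ f p).toLinearMap = 1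

/-- Directional derivative of `F` along the vector field `X`. -/
def vD (X : R2 → R2) (F : R2 → R3) : R2 → R3 := fun q => fderiv ℝ F q (X q)

/-- `φ_i = g_i' / (g_i² ω_i)`. -/
def phiW (g w : ℝ → ℝ) : ℝ → ℝ := fun t => deriv g t / (g t ^ 2 * w t)
/-- `Φ_i = (g_i/g_i') φ_i'`. -/
def PhiW (g w : ℝ → ℝ) : ℝ → ℝ := fun t => g t / deriv g t * deriv (phiW g w) t

/-- standard cuspidal butterfly -/
def fCBF : R2 → R3 := fun q =>
  (q.1, 5 * q.2 ^ 4 + 2 * q.1 * q.2, 4 * q.2 ^ 5 + q.1 * q.2 ^ 2 - q.1 ^ 2)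
/-- standard cuspidal S₁⁺ singularity -/
def fCS1p : R2 → R3 := fun q => (q.1, q.2 ^ 2, q.2 ^ 3 * (q.1 ^ 2 + q.2 ^ 2))
/-- standard cuspidal S₁⁻ singularity -/
def fCS1m : R2 → R3 := fun q => (q.1, q.2 ^ 2, q.2 ^ 3 * (q.1 ^ 2 - q.2 ^ 2))
/-- standard cuspidal edge -/
def fCE : R2 → R3 := fun q => (q.1, q.2 ^ 2, q.2 ^ 3)
/-- standard (2,5)-cuspidal edge -/
def fCE25 : R2 → R3 := fun q => (q.1, q.2 ^ 2, q.2 ^ 5)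
/-- standard cuspidal beaks -/
def fCBK : R2 → R3 := fun q =>
  (q.2, q.1 ^ 3 - q.1 * q.2 ^ 2, 3 * q.1 ^ 4 - 2 * q.1 ^ 2 * q.2 ^ 2)
/-- standard cuspidal lips -/
def fCLP : R2 → R3 := fun q =>
  (q.2, q.1 ^ 3 + q.1 * q.2 ^ 2, 3 * q.1 ^ 4 + 2 * q.1 ^ 2 * q.2 ^ 2)
/-- standard D₄⁺ singularity -/
def fD4p : R2 → R3 := fun q =>
  (q.1 * q.2, q.1 ^ 2 + 3 * q.2 ^ 2, q.1 ^ 2 * q.2 + q.2 ^ 3)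
/-- standard D₄⁻ singularity -/
def fD4m : R2 → R3 := fun q =>
  (q.1 * q.2, q.1 ^ 2 - 3 * q.2 ^ 2, q.1 ^ 2 * q.2 - q.2 ^ 3)

open scoped Topology ContDiff

/-!
The `v`-curves of the surface are translates of one curve `γ` with `γ' = ω₂ • δ`, where
`δ = nullVec ∘ g₂`. Since `ω₂` vanishes to first order, `ω₂ dv` is a constant multiple of `s ds` for
a local coordinate `s`; since the surface is not a front, `δ' = 0` at `s = 0`, so the odd part of
`γ` begins with `s⁵`. By Whitney's theorem on even functions `γ = F(s²) + s⁵ H(s²)` with `F` and `H`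
smooth, and `H(0)` is a nonzero multiple of `(g₂''/ω₂')' • (g₂, -g₂, -1)`. If `H(0) ≠ 0`, then
`f_u`, `F'(0)` and `H(0)` are linearly independent, and `f` factors through `fCE25` by a
diffeomorphism of the target. If `H(0) = 0`, then `s` parametrizes an immersed curve with velocity
in the kernel of `df` whose image under `f` has odd part `o(s⁵)`. The existence of such a curve is
invariant under equivalence, and `fCE25` admits none.
-/

/-! ### Division by the independent variable -/

section Hadamard

variable {E : Type*} [NormedAddCommGroup E] [NormedSpace ℝ E]

theorem hasDerivAt_integral_pow_smul_comp {φ : ℝ → E} (hφ : ContDiff ℝ 1 φ) (k m : ℕ) (y : ℝ) :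
    HasDerivAt (fun y => ∫ t in (0 : ℝ)..1, t ^ k • φ (t ^ m * y))
      (∫ t in (0 : ℝ)..1, t ^ (k + m) • deriv φ (t ^ m * y)) y := by
  have hφc : Continuous φ := hφ.continuous
  have hφ'c : Continuous (deriv φ) := hφ.continuous_deriv le_rfl
  obtain ⟨C, hC⟩ := (isCompact_closedBall (0 : ℝ) (|y| + 1)).exists_bound_of_continuousOn
    hφ'c.continuousOn
  refine (intervalIntegral.hasDerivAt_integral_of_dominated_loc_of_deriv_le
    (F := fun y t => t ^ k • φ (t ^ m * y)) (F' := fun y t => t ^ (k + m) • deriv φ (t ^ m * y))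
    (bound := fun _ => C) (Metric.ball_mem_nhds y one_pos)
    (Eventually.of_forall fun x => Continuous.aestronglyMeasurable (by fun_prop))
    (Continuous.intervalIntegrable (by fun_prop) _ _)
    (Continuous.aestronglyMeasurable (by fun_prop)) ?_
    (continuous_const.intervalIntegrable _ _) ?_).2
  · refine Eventually.of_forall fun t ht x hx => ?_
    rw [Set.uIoc_of_le zero_le_one] at ht
    have ht_pow (n : ℕ) : |t ^ n| ≤ 1 := by
      rw [abs_pow, abs_of_pos ht.1]
      exact pow_le_one₀ ht.1.le ht.2
    have hx_abs : |x| ≤ |y| + 1 := by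
      have hxy : |x - y| < 1 := hx
      linarith [abs_sub_abs_le_abs_sub x y]
    have htx : t ^ m * x ∈ Metric.closedBall (0 : ℝ) (|y| + 1) := by
      rw [mem_closedBall_zero_iff, norm_mul]
      exact (mul_le_of_le_one_left (norm_nonneg x) (ht_pow m)).trans hx_abs
    rw [norm_smul]
    exact (mul_le_of_le_one_left (norm_nonneg _) (ht_pow _)).trans (hC _ htx)
  · refine Eventually.of_forall fun t _ x _ => ?_
    have hφx := (hφ.differentiable one_ne_zero (t ^ m * x)).hasDerivAt
    have h := (hφx.scomp x ((hasDerivAt_id x).const_mul (t ^ m))).fun_const_smul (t ^ k)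
    simpa only [Function.comp_apply, mul_one, smul_smul, pow_add] using h

theorem contDiff_integral_pow_smul_comp {φ : ℝ → E} (hφ : ContDiff ℝ ∞ φ) (k m : ℕ) :
    ContDiff ℝ ∞ fun y => ∫ t in (0 : ℝ)..1, t ^ k • φ (t ^ m * y) := by
  rw [contDiff_infty]
  intro n
  induction n generalizing φ k with
  | zero =>
    exact contDiff_zero.2 <| continuous_iff_continuousAt.2 fun y =>
      (hasDerivAt_integral_pow_smul_comp (contDiff_infty.1 hφ 1) k m y).continuousAt
  | succ n ih =>
    have h := hasDerivAt_integral_pow_smul_comp (contDiff_infty.1 hφ 1) k m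
    push_cast
    refine contDiff_succ_iff_deriv.2 ⟨fun y => (h y).differentiableAt, by simp, ?_⟩
    rw [funext fun y => (h y).deriv]
    exact ih (contDiff_infty_iff_deriv.1 hφ).2 (k + m)

theorem pow_smul_integral_pow_smul_comp (φ : ℝ → E) (k : ℕ) (s : ℝ) :
    s ^ (k + 1) • ∫ t in (0 : ℝ)..1, t ^ k • φ (t * s) = ∫ r in (0 : ℝ)..s, r ^ k • φ r := by
  have h := intervalIntegral.smul_integral_comp_mul_left (fun r => r ^ k • φ r) s
    (a := 0) (b := 1)
  rw [mul_zero, mul_one] at h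
  rw [← h, pow_succ', mul_smul, ← intervalIntegral.integral_smul]
  simp only [mul_pow, mul_smul, mul_comm s, smul_comm (s ^ k)]

theorem contDiff_dslope [CompleteSpace E] {b : ℝ → E} (hb : ContDiff ℝ ∞ b) (a : ℝ) :
    ContDiff ℝ ∞ (dslope b a) := by
  have hb' := contDiff_infty_iff_deriv.1 hb
  have h_eq : dslope b a = fun x => ∫ t in (0 : ℝ)..1, t ^ 0 • deriv b (t ^ 1 * (x - a) + a) := by
    funext x
    rcases eq_or_ne x a with rfl | hx
    · simp
    refine smul_right_injective E (sub_ne_zero.2 hx) ?_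
    have h := intervalIntegral.smul_integral_comp_mul_add (deriv b) (x - a) a (a := 0) (b := 1)
    rw [mul_zero, mul_one, zero_add, sub_add_cancel, intervalIntegral.integral_deriv_eq_sub
      (fun y _ => hb'.1 y) (hb'.2.continuous.intervalIntegrable _ _)] at h
    simpa only [sub_smul_dslope, pow_zero, one_smul, pow_one, mul_comm _ (x - a)] using h.symm
  rw [h_eq]
  exact (contDiff_integral_pow_smul_comp (hb'.2.comp (contDiff_id.add contDiff_const)) 0 1).comp
    (contDiff_id.sub contDiff_const)

theorem iteratedDeriv_succ_sub_smul_self {φ : ℝ → E} (hφ : ContDiff ℝ ∞ φ) (a : ℝ) (n : ℕ) :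
    iteratedDeriv (n + 1) (fun x => (x - a) • φ x) a = (n + 1 : ℝ) • iteratedDeriv n φ a := by
  induction n generalizing φ with
  | zero =>
    have h := ((hasDerivAt_id a).sub_const a).fun_smul ((hφ.differentiable (by simp)) a).hasDerivAt
    simpa using h.deriv
  | succ n ih =>
    have hφ' := contDiff_infty_iff_deriv.1 hφ
    have h_deriv : deriv (fun x => (x - a) • φ x) = fun x => (x - a) • deriv φ x + φ x := by
      funext x
      simpa using (((hasDerivAt_id x).sub_const a).fun_smul (hφ'.1 x).hasDerivAt).deriv
    have h_smul : ContDiff ℝ ∞ fun x => (x - a) • deriv φ x :=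
      (contDiff_id.sub contDiff_const).smul hφ'.2
    rw [iteratedDeriv_succ', h_deriv, iteratedDeriv_fun_add (contDiff_infty.1 h_smul _).contDiffAt
      (contDiff_infty.1 hφ _).contDiffAt, ih hφ'.2, ← iteratedDeriv_succ']
    push_cast
    module

theorem iteratedDeriv_dslope_self [CompleteSpace E] {b : ℝ → E} (hb : ContDiff ℝ ∞ b) (a : ℝ)
    (n : ℕ) : iteratedDeriv n (dslope b a) a = (n + 1 : ℝ)⁻¹ • iteratedDeriv (n + 1) b a := by
  have h := iteratedDeriv_succ_sub_smul_self (contDiff_dslope hb a) a n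
  have h_sub : (fun x => (x - a) • dslope b a x) = fun x => b x - b a :=
    funext fun x => sub_smul_dslope b a x
  rw [h_sub, iteratedDeriv_succ', deriv_sub_const_fun, ← iteratedDeriv_succ'] at h
  rw [h, inv_smul_smul₀ (by positivity)]

end Hadamard

/-! ### Borel's lemma -/

section Borel

theorem exists_hasCompactSupport_iteratedDeriv_eq_ite (n : ℕ) :
    ∃ ψ : ℝ → ℝ, ContDiff ℝ ∞ ψ ∧ HasCompactSupport ψ ∧
      ∀ k, iteratedDeriv k ψ 0 = if k = n then 1 else 0 := by
  let χ : ContDiffBump (0 : ℝ) := ⟨1, 2, one_pos, one_lt_two⟩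
  refine ⟨fun y => (n.factorial : ℝ)⁻¹ * (y ^ n * χ y),
    contDiff_const.mul ((contDiff_id.pow n).mul χ.contDiff),
    χ.hasCompactSupport.mul_left.mul_left, fun k => ?_⟩
  have h_pow : (fun y : ℝ => y ^ n * χ y) =ᶠ[𝓝 0] fun y => y ^ n := by
    filter_upwards [χ.eventuallyEq_one] with y hy
    rw [hy, Pi.one_apply, mul_one]
  rw [iteratedDeriv_const_mul_field, h_pow.iteratedDeriv_eq, iteratedDeriv_fun_pow_zero]
  have := Nat.factorial_ne_zero n
  split_ifs <;> simp [this]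

theorem exists_norm_iteratedDeriv_le {ψ : ℝ → ℝ} (hψ : ContDiff ℝ ∞ ψ)
    (hψs : HasCompactSupport ψ) (k : ℕ) : ∃ C, ∀ x, ‖iteratedDeriv k ψ x‖ ≤ C := by
  simp only [← norm_iteratedFDeriv_eq_norm_iteratedDeriv]
  exact (hψ.continuous_iteratedFDeriv (by exact_mod_cast le_top)).bounded_above_of_compact_support
    (hψs.iteratedFDeriv k)

variable {E : Type*} [NormedAddCommGroup E] [NormedSpace ℝ E]

theorem iteratedDeriv_const_mul_comp_mul_smul_const {ψ : ℝ → ℝ} (hψ : ContDiff ℝ ∞ ψ) (a l : ℝ)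
    (c : E) (k : ℕ) (x : ℝ) :
    iteratedDeriv k (fun x => (a * ψ (l * x)) • c) x =
      (a * l ^ k * iteratedDeriv k ψ (l * x)) • c := by
  have h : ContDiff ℝ ∞ fun x => a * ψ (l * x) :=
    contDiff_const.mul (hψ.comp (contDiff_const.mul contDiff_id))
  rw [iteratedDeriv_smul_const (contDiff_infty.1 h k).contDiffAt, iteratedDeriv_const_mul_field,
    iteratedDeriv_comp_const_mul (contDiff_infty.1 hψ k), mul_assoc]

theorem inv_pow_mul_pow_le_inv {l : ℝ} (hl : 1 ≤ l) {k n : ℕ} (hkn : k < n) :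
    l⁻¹ ^ n * l ^ k ≤ l⁻¹ := by
  have hl0 : 0 < l := one_pos.trans_le hl
  rw [inv_pow, inv_mul_le_iff₀ (by positivity), ← div_eq_mul_inv, le_div_iff₀ hl0, ← pow_succ]
  exact pow_le_pow_right₀ hl hkn

theorem exists_iteratedDeriv_eq_ite_of_norm_le (n : ℕ) (c : E) {δ : ℝ} (hδ : 0 < δ) :
    ∃ F : ℝ → E, ContDiff ℝ ∞ F ∧ (∀ k, iteratedDeriv k F 0 = if k = n then c else 0) ∧
      (∀ k, ∃ C, ∀ x, ‖iteratedDeriv k F x‖ ≤ C) ∧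
      ∀ k < n, ∀ x, ‖iteratedDeriv k F x‖ ≤ δ := by
  obtain ⟨ψ, hψ, hψs, hψ0⟩ := exists_hasCompactSupport_iteratedDeriv_eq_ite n
  choose B hB using exists_norm_iteratedDeriv_le hψ hψs
  have hB0 (k : ℕ) : 0 ≤ B k := (norm_nonneg _).trans (hB k 0)
  set S := ∑ k ∈ Finset.range n, B k
  have hS : 0 ≤ S := Finset.sum_nonneg fun k _ => hB0 k
  -- Rescaling by `l` multiplies the `k`-th derivative by `l ^ (k - n)`, which is at most `l⁻¹`.
  let l : ℝ := 1 + S * ‖c‖ / δ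
  have hl : 1 ≤ l := le_add_of_nonneg_right (by positivity)
  have hl0 : 0 < l := one_pos.trans_le hl
  let F : ℝ → E := fun x => (l⁻¹ ^ n * ψ (l * x)) • c
  have hF_norm (k : ℕ) (x : ℝ) : ‖iteratedDeriv k F x‖ ≤ l⁻¹ ^ n * l ^ k * (B k * ‖c‖) := by
    rw [iteratedDeriv_const_mul_comp_mul_smul_const hψ, norm_smul, norm_mul,
      Real.norm_of_nonneg (by positivity), mul_assoc]
    gcongr
    exact hB k _
  refine ⟨F, (contDiff_const.mul (hψ.comp (contDiff_const.mul contDiff_id))).smul contDiff_const,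
    fun k => ?_, fun k => ⟨_, hF_norm k⟩, fun k hk x => (hF_norm k x).trans ?_⟩
  · rw [iteratedDeriv_const_mul_comp_mul_smul_const hψ, mul_zero, hψ0]
    split_ifs with hk
    · rw [hk, mul_one, ← mul_pow, inv_mul_cancel₀ hl0.ne', one_pow, one_smul]
    · rw [mul_zero, zero_smul]
  · have hBS : B k ≤ S := Finset.single_le_sum (fun k _ => hB0 k) (Finset.mem_range.2 hk)
    calc l⁻¹ ^ n * l ^ k * (B k * ‖c‖) ≤ l⁻¹ * (S * ‖c‖) := by
          have := inv_pow_mul_pow_le_inv hl hk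
          have := hB0 k
          gcongr
      _ ≤ δ := by
          rw [inv_mul_le_iff₀ hl0, add_mul, div_mul_cancel₀ _ hδ.ne', one_mul]
          exact le_add_of_nonneg_left hδ.le

theorem exists_contDiff_iteratedDeriv_eq [CompleteSpace E] (c : ℕ → E) :
    ∃ F : ℝ → E, ContDiff ℝ ∞ F ∧ ∀ k, iteratedDeriv k F 0 = c k := by
  choose F hF hF0 hF_bdd hF_small using fun n =>
    exists_iteratedDeriv_eq_ite_of_norm_le n (c n) (pow_pos one_half_pos n : (0 : ℝ) < (1 / 2) ^ n)
  choose C hC using hF_bdd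
  let v : ℕ → ℕ → ℝ := fun k n => if k < n then (1 / 2) ^ n else C n k
  have hv (k : ℕ) : Summable (v k) := by
    rw [← summable_nat_add_iff (k + 1)]
    refine ((summable_nat_add_iff (k + 1)).2 summable_geometric_two).congr fun n => ?_
    exact (if_pos (by omega)).symm
  have hFv (k n : ℕ) (x : ℝ) : ‖iteratedFDeriv ℝ k (F n) x‖ ≤ v k n := by
    rw [norm_iteratedFDeriv_eq_norm_iteratedDeriv]
    by_cases hkn : k < n
    · simpa only [v, if_pos hkn] using hF_small n k hkn x
    · simpa only [v, if_neg hkn] using hC n k x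
  refine ⟨fun x => ∑' n, F n x, contDiff_tsum (N := ⊤) hF (fun k _ => hv k)
    (fun k n x _ => hFv k n x), fun k => ?_⟩
  have h_summable : Summable fun n => iteratedFDeriv ℝ k (F n) 0 :=
    Summable.of_norm_bounded (hv k) fun n => hFv k n 0
  rw [iteratedDeriv_eq_iteratedFDeriv, iteratedFDeriv_tsum_apply (N := ⊤) hF (fun k _ => hv k)
    (fun k n x _ => hFv k n x) le_top, ContinuousMultilinearMap.tsum_eval h_summable]
  simp only [← iteratedDeriv_eq_iteratedFDeriv, hF0, @eq_comm ℕ k]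
  exact tsum_ite_eq k c

end Borel

/-! ### Flat functions and Whitney's theorem on even functions -/

section Whitney

variable {E : Type*} [NormedAddCommGroup E] [NormedSpace ℝ E]

/-- `g` is *flat* at `a`: all its derivatives at `a`, including `g a` itself, vanish. -/
def IsFlatAt (g : ℝ → E) (a : ℝ) : Prop := ∀ n, iteratedDeriv n g a = 0

theorem IsFlatAt.eq_zero {g : ℝ → E} {a : ℝ} (hg : IsFlatAt g a) : g a = 0 := by
  simpa only [iteratedDeriv_zero] using hg 0

protected theorem IsFlatAt.deriv {g : ℝ → E} {a : ℝ} (hg : IsFlatAt g a) : IsFlatAt (deriv g) a :=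
  fun n => by rw [← iteratedDeriv_succ', hg]

protected theorem IsFlatAt.dslope [CompleteSpace E] {g : ℝ → E} {a : ℝ} (hg : IsFlatAt g a)
    (hg_smooth : ContDiff ℝ ∞ g) : IsFlatAt (dslope g a) a :=
  fun n => by rw [iteratedDeriv_dslope_self hg_smooth, hg, smul_zero]

theorem IsFlatAt.hasDerivAt_comp_sqrt [CompleteSpace E] {g : ℝ → E} (hg : IsFlatAt g 0)
    (hg_smooth : ContDiff ℝ ∞ g) (t : ℝ) :
    HasDerivAt (fun t => g √t) ((2⁻¹ : ℝ) • dslope (deriv g) 0 √t) t := by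
  have hg' := contDiff_infty_iff_deriv.1 hg_smooth
  have h_cont : Continuous fun t => (2⁻¹ : ℝ) • dslope (deriv g) 0 √t :=
    ((contDiff_dslope hg'.2 0).continuous.comp Real.continuous_sqrt).const_smul _
  -- The derivative extends continuously to `0`, so the point `t = 0` needs no separate treatment.
  refine hasDerivAt_of_hasDerivAt_of_ne' (x := 0) (fun t ht => ?_)
    (hg_smooth.continuous.comp Real.continuous_sqrt).continuousAt h_cont.continuousAt t
  rcases ht.lt_or_gt with ht | ht
  · rw [Real.sqrt_eq_zero_of_nonpos ht.le, dslope_same, hg.deriv.deriv.eq_zero, smul_zero]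
    refine (hasDerivAt_const t (g 0)).congr_of_eventuallyEq ?_
    filter_upwards [Iio_mem_nhds ht] with x hx
    rw [Function.comp_apply, Real.sqrt_eq_zero_of_nonpos (le_of_lt hx)]
  · have hs : √t ≠ 0 := (Real.sqrt_pos.2 ht).ne'
    refine ((hg'.1 √t).hasDerivAt.scomp t (Real.hasDerivAt_sqrt ht.ne')).congr_deriv ?_
    have h := sub_smul_dslope (deriv g) 0 √t
    rw [sub_zero, hg.deriv.eq_zero, sub_zero] at h
    rw [← h, smul_smul]
    congr 1
    field_simp

theorem IsFlatAt.contDiff_comp_sqrt [CompleteSpace E] {g : ℝ → E} (hg : IsFlatAt g 0)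
    (hg_smooth : ContDiff ℝ ∞ g) : ContDiff ℝ ∞ fun t => g √t := by
  rw [contDiff_infty]
  intro n
  induction n generalizing g with
  | zero => exact contDiff_zero.2 (hg_smooth.continuous.comp Real.continuous_sqrt)
  | succ n ih =>
    have h := hg.hasDerivAt_comp_sqrt hg_smooth
    have hg' := (contDiff_infty_iff_deriv.1 hg_smooth).2
    push_cast
    refine contDiff_succ_iff_deriv.2 ⟨fun t => (h t).differentiableAt, by simp, ?_⟩
    rw [funext fun t => (h t).deriv]
    exact (ih (hg.deriv.dslope hg') (contDiff_dslope hg' 0)).const_smul _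

theorem iteratedDeriv_two_mul_comp_sq {β : ℝ → E} (hβ : ContDiff ℝ ∞ β) (n : ℕ) :
    iteratedDeriv (2 * n) (fun s => β (s ^ 2)) 0 =
      ((2 * n).factorial / n.factorial : ℝ) • iteratedDeriv n β 0 := by
  induction n generalizing β with
  | zero => simp
  | succ n ih =>
    have hβ' := contDiff_infty_iff_deriv.1 hβ
    have h_sq : ContDiff ℝ ∞ fun s => deriv β (s ^ 2) := hβ'.2.comp (contDiff_id.pow 2)
    have h_deriv : deriv (fun s => β (s ^ 2)) = fun s => (s - 0) • (2 : ℝ) • deriv β (s ^ 2) := by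
      funext s
      refine ((hβ'.1 (s ^ 2)).hasDerivAt.scomp s (hasDerivAt_pow 2 s)).deriv.trans ?_
      rw [sub_zero, smul_smul]
      congr 1
      push_cast
      ring
    rw [mul_add_one, iteratedDeriv_succ', h_deriv, iteratedDeriv_succ_sub_smul_self
      (h_sq.const_smul _), iteratedDeriv_fun_const_smul (contDiff_infty.1 h_sq _).contDiffAt,
      ih hβ'.2, ← iteratedDeriv_succ', smul_smul, smul_smul]
    congr 1
    rw [Nat.factorial_succ, Nat.factorial_succ, Nat.factorial_succ]
    have := Nat.factorial_ne_zero n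
    push_cast
    field_simp
    ring

theorem iteratedDeriv_odd_of_even {f : ℝ → E} (hf : Function.Even f) (n : ℕ) :
    iteratedDeriv (2 * n + 1) f 0 = 0 := by
  have h := iteratedDeriv_comp_neg (2 * n + 1) f 0
  rw [funext hf, neg_zero, Odd.neg_one_pow ⟨n, rfl⟩, neg_one_smul] at h
  have : IsAddTorsionFree E := .of_isTorsionFree ℝ E
  exact self_eq_neg.1 h

theorem exists_contDiff_eq_comp_sq_of_even [CompleteSpace E] {f : ℝ → E} (hf : ContDiff ℝ ∞ f)
    (hf_even : Function.Even f) : ∃ P : ℝ → E, ContDiff ℝ ∞ P ∧ ∀ s, f s = P (s ^ 2) := by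
  obtain ⟨P, hP, hP0⟩ := exists_contDiff_iteratedDeriv_eq fun n =>
    ((2 * n).factorial / n.factorial : ℝ)⁻¹ • iteratedDeriv (2 * n) f 0
  have hP_sq : ContDiff ℝ ∞ fun s => P (s ^ 2) := hP.comp (contDiff_id.pow 2)
  have hP_even : Function.Even fun s => P (s ^ 2) := fun s => congrArg P (neg_sq s)
  let g : ℝ → E := fun s => f s - P (s ^ 2)
  have hg : ContDiff ℝ ∞ g := hf.sub hP_sq
  have hg_flat : IsFlatAt g 0 := fun n => by
    rw [iteratedDeriv_fun_sub (contDiff_infty.1 hf n).contDiffAt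
      (contDiff_infty.1 hP_sq n).contDiffAt]
    obtain ⟨m, rfl | rfl⟩ := Nat.even_or_odd' n
    · rw [iteratedDeriv_two_mul_comp_sq hP, hP0, smul_inv_smul₀ (by positivity), sub_self]
    · rw [iteratedDeriv_odd_of_even hf_even, iteratedDeriv_odd_of_even hP_even, sub_zero]
  refine ⟨fun y => P y + g √y, hP.add (hg_flat.contDiff_comp_sqrt hg), fun s => ?_⟩
  have hg_abs : g |s| = g s := by
    rcases abs_choice s with hs | hs <;> rw [hs]
    exact congrArg₂ (· - ·) (hf_even s) (hP_even s)
  change f s = P (s ^ 2) + g √(s ^ 2)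
  rw [Real.sqrt_sq_eq_abs, hg_abs, add_sub_cancel]

theorem exists_contDiff_eq_comp_sq_add_smul_comp_sq [CompleteSpace E] {f : ℝ → E}
    (hf : ContDiff ℝ ∞ f) : ∃ P Q : ℝ → E, ContDiff ℝ ∞ P ∧ ContDiff ℝ ∞ Q ∧
      ∀ s, f s = P (s ^ 2) + s • Q (s ^ 2) := by
  have hf_neg : ContDiff ℝ ∞ fun s => f (-s) := hf.comp contDiff_neg
  let o : ℝ → E := fun s => (2⁻¹ : ℝ) • (f s - f (-s))
  have ho : ContDiff ℝ ∞ o := (hf.sub hf_neg).const_smul _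
  have ho_slope (s : ℝ) : o s = s • dslope o 0 s := by
    simpa [o] using (sub_smul_dslope o 0 s).symm
  have ho_even : Function.Even (dslope o 0) := fun s => by
    rcases eq_or_ne s 0 with rfl | hs
    · rw [neg_zero]
    · refine smul_right_injective E hs ?_
      have h := ho_slope (-s)
      rw [neg_smul] at h
      change s • dslope o 0 (-s) = s • dslope o 0 s
      rw [← ho_slope, ← neg_eq_iff_eq_neg.2 h]
      simp only [o, neg_neg]
      module
  obtain ⟨P, hP, hP_eq⟩ := exists_contDiff_eq_comp_sq_of_even
    (f := fun s => (2⁻¹ : ℝ) • (f s + f (-s))) ((hf.add hf_neg).const_smul _)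
    (fun s => by simp only [neg_neg, add_comm])
  obtain ⟨Q, hQ, hQ_eq⟩ := exists_contDiff_eq_comp_sq_of_even (contDiff_dslope ho 0) ho_even
  refine ⟨P, Q, hP, hQ, fun s => ?_⟩
  rw [← hP_eq, ← hQ_eq, ← ho_slope]
  simp only [o]
  module

end Whitney

/-! ### Germs of diffeomorphisms -/

section LocalDiffeo

variable {E F : Type*} [NormedAddCommGroup E] [NormedSpace ℝ E] [NormedAddCommGroup F]
  [NormedSpace ℝ F]

theorem IsLocalDiffeoAt.exists_inverse {Φ : E → F} {p : E} (h : IsLocalDiffeoAt Φ p) :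
    ∃ Ψ : F → E, IsLocalDiffeoAt Ψ (Φ p) ∧ Ψ (Φ p) = p ∧ (∀ᶠ x in 𝓝 p, Ψ (Φ x) = x) ∧
      ∀ᶠ y in 𝓝 (Φ p), Φ (Ψ y) = y := by
  obtain ⟨U, V, Ψ, hU, hpU, hV, hpV, hΦ, hΨ, hUV, hVU, hleft, hright⟩ := h
  have hΨp : Ψ (Φ p) = p := hleft p hpU
  exact ⟨Ψ, ⟨V, U, Φ, hV, hpV, hU, hΨp.symm ▸ hpU, hΨ, hΦ, hVU, hUV, hright, hleft⟩, hΨp,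
    eventually_of_mem (hU.mem_nhds hpU) hleft, eventually_of_mem (hV.mem_nhds hpV) hright⟩

theorem IsLocalDiffeoAt.eventually_contDiffAt {Φ : E → F} {p : E} (h : IsLocalDiffeoAt Φ p) :
    ∀ᶠ x in 𝓝 p, ContDiffAt ℝ ∞ Φ x := by
  obtain ⟨U, -, -, hU, hpU, -, -, hΦ, -⟩ := h
  exact eventually_of_mem (hU.mem_nhds hpU) fun x hx => hΦ.contDiffAt (hU.mem_nhds hx)

theorem IsLocalDiffeoAt.contDiffAt {Φ : E → F} {p : E} (h : IsLocalDiffeoAt Φ p) :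
    ContDiffAt ℝ ∞ Φ p :=
  h.eventually_contDiffAt.self_of_nhds

theorem IsLocalDiffeoAt.differentiableAt {Φ : E → F} {p : E} (h : IsLocalDiffeoAt Φ p) :
    DifferentiableAt ℝ Φ p :=
  h.contDiffAt.differentiableAt (by simp)

theorem IsLocalDiffeoAt.eq_zero_of_hasDerivAt {Φ : E → F} {c : ℝ → E} {c' : E} {t : ℝ}
    (h : IsLocalDiffeoAt Φ (c t)) (hc : HasDerivAt c c' t)
    (hΦc : HasDerivAt (fun s => Φ (c s)) 0 t) : c' = 0 := by
  obtain ⟨Ψ, hΨ, -, hleft, -⟩ := h.exists_inverse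
  have hΨΦc := hΨ.differentiableAt.hasFDerivAt.comp_hasDerivAt t hΦc
  rw [map_zero] at hΨΦc
  exact hc.unique (hΨΦc.congr_of_eventuallyEq
    ((hc.continuousAt.eventually hleft).mono fun s hs => hs.symm))

theorem IsLocalDiffeoAt.deriv_ne_zero {σ : ℝ → ℝ} {a : ℝ} (h : IsLocalDiffeoAt σ a) :
    deriv σ a ≠ 0 := fun h0 =>
  one_ne_zero <| h.eq_zero_of_hasDerivAt (hasDerivAt_id a) (h0 ▸ h.differentiableAt.hasDerivAt)

theorem IsLocalDiffeoAt.prodMap {E' F' : Type*} [NormedAddCommGroup E'] [NormedSpace ℝ E']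
    [NormedAddCommGroup F'] [NormedSpace ℝ F'] {Φ : E → F} {Φ' : E' → F'} {p : E} {p' : E'}
    (h : IsLocalDiffeoAt Φ p) (h' : IsLocalDiffeoAt Φ' p') :
    IsLocalDiffeoAt (Prod.map Φ Φ') (p, p') := by
  obtain ⟨U, V, Ψ, hU, hpU, hV, hpV, hΦ, hΨ, hUV, hVU, hleft, hright⟩ := h
  obtain ⟨U', V', Ψ', hU', hpU', hV', hpV', hΦ', hΨ', hUV', hVU', hleft', hright'⟩ := h'
  exact ⟨U ×ˢ U', V ×ˢ V', Prod.map Ψ Ψ', hU.prod hU', ⟨hpU, hpU'⟩, hV.prod hV', ⟨hpV, hpV'⟩,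
    hΦ.prodMap hΦ', hΨ.prodMap hΨ', hUV.prodMap hUV', hVU.prodMap hVU',
    fun x hx => Prod.ext (hleft x.1 hx.1) (hleft' x.2 hx.2),
    fun y hy => Prod.ext (hright y.1 hy.1) (hright' y.2 hy.2)⟩

theorem isLocalDiffeoAt_of_hasFDerivAt [CompleteSpace E] {Φ : E → F} {p : E} {e : E ≃L[ℝ] F}
    (hΦ : ∀ᶠ x in 𝓝 p, ContDiffAt ℝ ∞ Φ x) (he : HasFDerivAt Φ (e : E →L[ℝ] F) p) :
    IsLocalDiffeoAt Φ p := by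
  obtain ⟨U, hUΦ, hU, hpU⟩ := eventually_nhds_iff.1 hΦ
  have hΦU : ContDiffOn ℝ ∞ Φ U := fun x hx => (hUΦ x hx).contDiffWithinAt
  let G := (hUΦ p hpU).toOpenPartialHomeomorph Φ he (by simp)
  have hpG : p ∈ G.source := (hUΦ p hpU).mem_toOpenPartialHomeomorph_source he (by simp)
  -- The inverse is smooth wherever the derivative is invertible, which is an open condition.
  let U' : Set E := U ∩ fderiv ℝ Φ ⁻¹' Set.range ((↑) : (E ≃L[ℝ] F) → E →L[ℝ] F)
  have hU' : IsOpen U' := (hΦU.continuousOn_fderiv_of_isOpen hU (by simp)).isOpen_inter_preimage hU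
    ContinuousLinearEquiv.isOpen
  let G' := G.restrOpen U' hU'
  have h_source : G'.source = G.source ∩ U' := G.restrOpen_source U' hU'
  have hpG' : p ∈ G'.source := h_source ▸ ⟨hpG, hpU, e, he.fderiv.symm⟩
  refine ⟨G'.source, G'.target, G'.symm, G'.open_source, hpG', G'.open_target,
    G'.map_source hpG', hΦU.mono fun x hx => ?_, fun y hy => ?_, G'.mapsTo, G'.symm.mapsTo,
    fun x hx => G'.left_inv hx, fun y hy => G'.right_inv hy⟩
  · exact (h_source ▸ hx).2.1
  · have hy' : G'.symm y ∈ G.source ∩ U' := h_source ▸ G'.map_target hy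
    obtain ⟨-, hyU, e', he'⟩ := hy'
    refine (G'.contDiffAt_symm (f₀' := e') hy ?_ (hUΦ _ hyU)).contDiffWithinAt
    rw [he']
    exact ((hUΦ _ hyU).differentiableAt (by simp)).hasFDerivAt

theorem isLocalDiffeoAt_of_hasDerivAt {σ : ℝ → ℝ} {a σ' : ℝ}
    (hσ : ∀ᶠ x in 𝓝 a, ContDiffAt ℝ ∞ σ x) (h : HasDerivAt σ σ' a) (hσ' : σ' ≠ 0) :
    IsLocalDiffeoAt σ a :=
  isLocalDiffeoAt_of_hasFDerivAt (e := ContinuousLinearEquiv.unitsEquivAut ℝ (Units.mk0 σ' hσ')) hσ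
    (h.hasFDerivAt.congr_fderiv (by ext; simp))

theorem isLocalDiffeoAt_of_injective [FiniteDimensional ℝ E] {Φ : E → E} {p : E}
    {L : E →L[ℝ] E} (hΦ : ∀ᶠ x in 𝓝 p, ContDiffAt ℝ ∞ Φ x) (hL : HasFDerivAt Φ L p)
    (hL_inj : Function.Injective L) : IsLocalDiffeoAt Φ p :=
  have := FiniteDimensional.complete ℝ E
  isLocalDiffeoAt_of_hasFDerivAt
    (e := (LinearEquiv.ofInjectiveEndo L.toLinearMap hL_inj).toContinuousLinearEquiv) hΦ
    (hL.congr_fderiv (by ext; rfl))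

theorem exists_contDiff_eventuallyEq [HasContDiffBump E] {φ : E → F} {a : E}
    (hφ : ∀ᶠ x in 𝓝 a, ContDiffAt ℝ ∞ φ x) : ∃ ψ : E → F, ContDiff ℝ ∞ ψ ∧ ψ =ᶠ[𝓝 a] φ := by
  obtain ⟨r, hr, hrφ⟩ := Metric.nhds_basis_closedBall.eventually_iff.1 hφ
  let χ : ContDiffBump a := ⟨r / 2, r, half_pos hr, half_lt_self hr⟩
  refine ⟨fun x => χ x • φ x, contDiff_iff_contDiffAt.2 fun x => ?_, ?_⟩
  · by_cases hx : x ∈ tsupport χ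
    · rw [χ.tsupport_eq] at hx
      exact χ.contDiffAt.smul (hrφ hx)
    · refine (contDiffAt_const (c := (0 : F))).congr_of_eventuallyEq ?_
      filter_upwards [notMem_tsupport_iff_eventuallyEq.1 hx] with y hy
      rw [hy, Pi.zero_apply, zero_smul]
  · filter_upwards [χ.eventuallyEq_one] with x hx
    rw [hx, Pi.one_apply, one_smul]

theorem IsLocalDiffeoAt.exists_contDiff_comp_eq {G : Type*} [NormedAddCommGroup G]
    [NormedSpace ℝ G] [HasContDiffBump F] {σ : E → F} {a : E} (hσ : IsLocalDiffeoAt σ a)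
    {δ : E → G} (hδ : ContDiff ℝ ∞ δ) :
    ∃ ψ : F → G, ContDiff ℝ ∞ ψ ∧ ∀ᶠ x in 𝓝 a, δ x = ψ (σ x) := by
  obtain ⟨τ, hτ, -, hleft, -⟩ := hσ.exists_inverse
  obtain ⟨ψ, hψ, hψ_eq⟩ := exists_contDiff_eventuallyEq
    (hτ.eventually_contDiffAt.mono fun y hy => hδ.contDiffAt.comp y hy)
  refine ⟨ψ, hψ, ?_⟩
  filter_upwards [hσ.differentiableAt.continuousAt.eventually hψ_eq, hleft] with x hψx hx
  rw [hψx, Function.comp_apply, hx]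

theorem exists_isLocalDiffeoAt_eq_mul_sq {b : ℝ → ℝ} (hb : ContDiff ℝ ∞ b) {a : ℝ} (hb0 : b a = 0)
    (hb1 : deriv b a = 0) (hb2 : deriv (deriv b) a ≠ 0) :
    ∃ σ : ℝ → ℝ, IsLocalDiffeoAt σ a ∧ σ a = 0 ∧
      ∀ᶠ x in 𝓝 a, b x = deriv (deriv b) a / 2 * σ x ^ 2 := by
  let C := dslope (dslope b a) a
  have hC : ContDiff ℝ ∞ C := contDiff_dslope (contDiff_dslope hb a) a
  have hC_eq (x : ℝ) : b x = (x - a) ^ 2 * C x := by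
    have h := sub_smul_dslope b a x
    have h' := sub_smul_dslope (dslope b a) a x
    rw [hb0, sub_zero] at h
    rw [dslope_same, hb1, sub_zero] at h'
    rw [← h, ← h', smul_eq_mul, smul_eq_mul, sq, mul_assoc]
  have hCa : C a = deriv (deriv b) a / 2 := by
    have h := iteratedDeriv_dslope_self hb a 1
    rw [iteratedDeriv_one, iteratedDeriv_succ, iteratedDeriv_one, smul_eq_mul] at h
    refine (dslope_same _ _).trans (h.trans ?_)
    push_cast
    ring
  have hCa0 : C a ≠ 0 := hCa ▸ div_ne_zero hb2 two_ne_zero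
  have h_pos : ∀ᶠ x in 𝓝 a, 0 < C x / C a :=
    (hC.continuous.div_const _).continuousAt.eventually_const_lt (by simp [hCa0])
  have h_sqrt : ∀ᶠ x in 𝓝 a, ContDiffAt ℝ ∞ (fun x => √(C x / C a)) x :=
    h_pos.mono fun x hx => (hC.contDiffAt.div_const _).sqrt hx.ne'
  refine ⟨fun x => (x - a) * √(C x / C a), isLocalDiffeoAt_of_hasDerivAt (σ' := 1)
    (h_sqrt.mono fun x hx => (contDiffAt_id.sub contDiffAt_const).mul hx) ?_ one_ne_zero,
    by simp, ?_⟩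
  · have h := ((hasDerivAt_id a).sub_const a).fun_mul
      (h_sqrt.self_of_nhds.differentiableAt (by simp)).hasDerivAt
    simpa [hCa0] using h
  · filter_upwards [h_pos] with x hx
    rw [hC_eq, mul_pow, Real.sq_sqrt hx.le, ← hCa]
    field_simp

end LocalDiffeo

/-! ### Normal form of a curve at a cusp -/

section Cusp

variable {E : Type*} [NormedAddCommGroup E] [NormedSpace ℝ E]

/-- `γ` is a cusp at `a` without cubic term: in the coordinate `s = σ v`, centred at `a`, its odd
part is divisible by `s ^ 5`. -/
structure IsCuspForm (γ : ℝ → E) (a : ℝ) (σ : ℝ → ℝ) (F H : ℝ → E) : Prop where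
  isLocalDiffeoAt : IsLocalDiffeoAt σ a
  map_eq_zero : σ a = 0
  contDiff_even : ContDiff ℝ ∞ F
  contDiff_odd : ContDiff ℝ ∞ H
  eventually_eq : ∀ᶠ v in 𝓝 a, γ v = F (σ v ^ 2) + σ v ^ 5 • H (σ v ^ 2)

theorem eventuallyEq_of_eventually_hasDerivAt {f g f' : ℝ → E} {a : ℝ}
    (hf : ∀ᶠ x in 𝓝 a, HasDerivAt f (f' x) x) (hg : ∀ᶠ x in 𝓝 a, HasDerivAt g (f' x) x)
    (hfg : f a = g a) : f =ᶠ[𝓝 a] g := by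
  obtain ⟨r, hr, h⟩ := Metric.nhds_basis_ball.eventually_iff.1 (hf.and hg)
  refine eventually_of_mem (Metric.ball_mem_nhds a hr) ?_
  exact Metric.isOpen_ball.eqOn_of_deriv_eq (convex_ball a r).isPreconnected
    (fun x hx => (h hx).1.differentiableAt.differentiableWithinAt)
    (fun x hx => (h hx).2.differentiableAt.differentiableWithinAt)
    (fun x hx => (h hx).1.deriv.trans (h hx).2.deriv.symm) (Metric.mem_ball_self hr) hfg

theorem exists_isLocalDiffeoAt_eq_mul_deriv {w : ℝ → ℝ} (hw : ContDiff ℝ ∞ w) {a : ℝ}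
    (hw0 : w a = 0) (hw1 : deriv w a ≠ 0) :
    ∃ σ : ℝ → ℝ, IsLocalDiffeoAt σ a ∧ σ a = 0 ∧
      ∀ᶠ x in 𝓝 a, w x = deriv w a * (σ x * deriv σ x) := by
  have hb (x : ℝ) : HasDerivAt (fun x => ∫ t in a..x, w t) (w x) x :=
    hw.continuous.integral_hasStrictDerivAt a x |>.hasDerivAt
  have hb_deriv : deriv (fun x => ∫ t in a..x, w t) = w := funext fun x => (hb x).deriv
  have hb_smooth : ContDiff ℝ ∞ fun x => ∫ t in a..x, w t :=
    contDiff_infty_iff_deriv.2 ⟨fun x => (hb x).differentiableAt, hb_deriv.symm ▸ hw⟩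
  obtain ⟨σ, hσ, hσa, hσ_eq⟩ := exists_isLocalDiffeoAt_eq_mul_sq hb_smooth
    intervalIntegral.integral_same (hb_deriv.symm ▸ hw0) (hb_deriv.symm ▸ hw1)
  rw [hb_deriv] at hσ_eq
  refine ⟨σ, hσ, hσa, ?_⟩
  filter_upwards [hσ_eq.eventually_nhds, hσ.eventually_contDiffAt] with x hx hσx
  have h := ((hσx.differentiableAt (by simp)).hasDerivAt.pow 2).const_mul (deriv w a / 2)
  rw [← (hb x).deriv, EventuallyEq.deriv_eq hx]
  refine h.deriv.trans ?_
  push_cast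
  ring

theorem deriv_inv_smul_deriv_deriv_of_eq_smul {w : ℝ → ℝ} {δ q : ℝ → E} {a : ℝ}
    (hw : ContDiff ℝ ∞ w) (hw0 : w a = 0) (hw1 : deriv w a ≠ 0) (hq : ContDiffAt ℝ 2 q a)
    (hδ : ∀ᶠ v in 𝓝 a, deriv δ v = w v • q v) :
    deriv (fun v => (deriv w v)⁻¹ • deriv (deriv δ) v) a = (2 : ℝ) • deriv q a := by
  have hw' := contDiff_infty_iff_deriv.1 hw
  have hw'' := contDiff_infty_iff_deriv.1 hw'.2
  have h_eq : (fun v => (deriv w v)⁻¹ • deriv (deriv δ) v) =ᶠ[𝓝 a]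
      fun v => q v + (w v / deriv w v) • deriv q v := by
    filter_upwards [hδ.eventually_nhds, hq.eventually (by simp),
      hw'.2.continuous.continuousAt.eventually_ne hw1] with v hδv hqv hwv
    rw [EventuallyEq.deriv_eq hδv, ((hw'.1 v).hasDerivAt.fun_smul
      (hqv.differentiableAt (by simp)).hasDerivAt).deriv, smul_add, inv_smul_smul₀ hwv, smul_smul,
      inv_mul_eq_div, add_comm]
  have h_quot := (hw'.1 a).hasDerivAt.fun_div (hw''.1 a).hasDerivAt hw1
  have hq' : DifferentiableAt ℝ (deriv q) a :=
    (hq.derivWithin (m := 1) (by norm_num)).differentiableAt (by simp)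
  rw [h_eq.deriv_eq, ((hq.differentiableAt (by simp)).hasDerivAt.fun_add
    (h_quot.fun_smul hq'.hasDerivAt)).deriv, hw0, zero_div, zero_smul, zero_add, zero_mul, sub_zero,
    ← sq, div_self (pow_ne_zero 2 hw1), one_smul, two_smul]

variable [CompleteSpace E]

theorem exists_eq_comp_sq_add_pow_three_smul {ψ : ℝ → E} (hψ : ContDiff ℝ ∞ ψ)
    (hψ1 : deriv ψ 0 = 0) :
    ∃ A D : ℝ → E, ContDiff ℝ ∞ A ∧ ContDiff ℝ ∞ D ∧
      (∀ s, ψ s = A (s ^ 2) + s ^ 3 • D (s ^ 2)) ∧ iteratedDeriv 3 ψ 0 = (6 : ℝ) • D 0 := by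
  obtain ⟨A, B, hA, hB, hAB⟩ := exists_contDiff_eq_comp_sq_add_smul_comp_sq hψ
  have hA_sq : ContDiff ℝ ∞ fun s => A (s ^ 2) := hA.comp (contDiff_id.pow 2)
  have hB_sq : ContDiff ℝ ∞ fun s => B (s ^ 2) := hB.comp (contDiff_id.pow 2)
  have hsB : ContDiff ℝ ∞ fun s => (s - 0) • B (s ^ 2) :=
    (contDiff_id.sub contDiff_const).smul hB_sq
  have hA_even : Function.Even fun s => A (s ^ 2) := fun s => congrArg A (neg_sq s)
  have hψ_odd (n : ℕ) : iteratedDeriv (2 * n + 1) ψ 0 =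
      ((2 * n + 1) * ((2 * n).factorial / n.factorial) : ℝ) • iteratedDeriv n B 0 := by
    rw [show ψ = fun s => A (s ^ 2) + (s - 0) • B (s ^ 2) by simpa only [sub_zero] using funext hAB,
      iteratedDeriv_fun_add (contDiff_infty.1 hA_sq _).contDiffAt
      (contDiff_infty.1 hsB _).contDiffAt, iteratedDeriv_odd_of_even hA_even,
      iteratedDeriv_succ_sub_smul_self hB_sq, iteratedDeriv_two_mul_comp_sq hB, zero_add, smul_smul]
    push_cast
    rfl
  have hB0 : B 0 = 0 := by
    have h := hψ_odd 0
    rw [iteratedDeriv_one, hψ1] at h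
    simpa using h.symm
  refine ⟨A, dslope B 0, hA, contDiff_dslope hB 0, fun s => ?_, ?_⟩
  · have h := sub_smul_dslope B 0 (s ^ 2)
    rw [sub_zero, hB0, sub_zero] at h
    rw [hAB, ← h, smul_smul, pow_succ' s 2]
  · rw [hψ_odd 1, dslope_same, iteratedDeriv_one]
    norm_num

theorem exists_hasDerivAt_comp_sq_add_pow_five_smul {A D : ℝ → E} (hA : ContDiff ℝ ∞ A)
    (hD : ContDiff ℝ ∞ D) (c : E) :
    ∃ F H : ℝ → E, ContDiff ℝ ∞ F ∧ ContDiff ℝ ∞ H ∧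
      F 0 = c ∧ deriv F 0 = A 0 ∧ H 0 = (2 / 5 : ℝ) • D 0 ∧
      ∀ s, HasDerivAt (fun s => F (s ^ 2) + s ^ 5 • H (s ^ 2))
        ((2 * s) • (A (s ^ 2) + s ^ 3 • D (s ^ 2))) s := by
  have hF (y : ℝ) : HasDerivAt (fun y => c + ∫ t in (0 : ℝ)..y, A t) (A y) y :=
    (hA.continuous.integral_hasStrictDerivAt 0 y).hasDerivAt.const_add c
  have hD_cont := hD.continuous
  have h_odd (s : ℝ) : s ^ 5 • (2 : ℝ) • ∫ t in (0 : ℝ)..1, t ^ 4 • D (t ^ 2 * s ^ 2) =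
      (2 : ℝ) • ∫ r in (0 : ℝ)..s, r ^ 4 • D (r ^ 2) := by
    rw [smul_comm, ← pow_smul_integral_pow_smul_comp (fun r => D (r ^ 2))]
    simp only [mul_pow]
  refine ⟨_, fun y => (2 : ℝ) • ∫ t in (0 : ℝ)..1, t ^ 4 • D (t ^ 2 * y),
    contDiff_infty_iff_deriv.2 ⟨fun y => (hF y).differentiableAt, ?_⟩,
    (contDiff_integral_pow_smul_comp hD 4 2).const_smul _, by simp, (hF 0).deriv, ?_, fun s => ?_⟩
  · rwa [funext fun y => (hF y).deriv]
  · simp only [mul_zero, intervalIntegral.integral_smul_const, integral_pow, smul_smul]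
    norm_num
  · simp only [h_odd]
    have h_cont : Continuous fun r => r ^ 4 • D (r ^ 2) := by fun_prop
    have h_int := h_cont.integral_hasStrictDerivAt 0 s
    refine (((hF (s ^ 2)).scomp s (hasDerivAt_pow 2 s)).add
      (h_int.hasDerivAt.const_smul (2 : ℝ))).congr_deriv ?_
    push_cast
    module

theorem IsLocalDiffeoAt.deriv_inv_smul_deriv_deriv {σ w : ℝ → ℝ} {δ ψ : ℝ → E} {a : ℝ}
    (hσ : IsLocalDiffeoAt σ a) (hσa : σ a = 0) (hw : ContDiff ℝ ∞ w) (hw1 : deriv w a ≠ 0)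
    (hwσ : ∀ᶠ v in 𝓝 a, w v = deriv w a * (σ v * deriv σ v)) (hψ : ContDiff ℝ ∞ ψ)
    (hψ1 : deriv ψ 0 = 0) (hδ : ∀ᶠ v in 𝓝 a, δ v = ψ (σ v)) :
    deriv (fun v => (deriv w v)⁻¹ • deriv (deriv δ) v) a =
      (deriv σ a / deriv w a) • iteratedDeriv 3 ψ 0 := by
  have hψ' := contDiff_infty_iff_deriv.1 hψ
  let k := dslope (deriv ψ) 0
  have hk : ContDiff ℝ ∞ k := contDiff_dslope hψ'.2 0
  have hk_eq (s : ℝ) : s • k s = deriv ψ s := by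
    simpa only [sub_zero, hψ1] using sub_smul_dslope (deriv ψ) 0 s
  have hk1 : deriv k 0 = (2⁻¹ : ℝ) • iteratedDeriv 3 ψ 0 := by
    have h := iteratedDeriv_dslope_self hψ'.2 0 1
    rw [iteratedDeriv_one, ← iteratedDeriv_succ'] at h
    refine h.trans ?_
    norm_num
  have hw0 : w a = 0 := by rw [hwσ.self_of_nhds, hσa, zero_mul, mul_zero]
  have hq : ContDiffAt ℝ ∞ (fun v => (deriv w a)⁻¹ • k (σ v)) a :=
    (hk.contDiffAt.comp a hσ.contDiffAt).const_smul _
  have hδ' : ∀ᶠ v in 𝓝 a, deriv δ v = w v • (deriv w a)⁻¹ • k (σ v) := by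
    filter_upwards [hδ.eventually_nhds, hσ.eventually_contDiffAt, hwσ] with v hδv hσv hwv
    rw [EventuallyEq.deriv_eq hδv, hwv, smul_smul, mul_right_comm, mul_inv_cancel₀ hw1, one_mul,
      mul_comm, mul_smul, hk_eq]
    exact ((hψ'.1 (σ v)).hasDerivAt.scomp v (hσv.differentiableAt (by simp)).hasDerivAt).deriv
  have hkσ : HasDerivAt (fun v => k (σ v)) (deriv σ a • deriv k (σ a)) a :=
    (hk.differentiable (by simp) (σ a)).hasDerivAt.scomp a hσ.differentiableAt.hasDerivAt
  rw [deriv_inv_smul_deriv_deriv_of_eq_smul hw hw0 hw1 (contDiffAt_infty.1 hq 2) hδ',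
    (hkσ.fun_const_smul (deriv w a)⁻¹).deriv, hσa, hk1]
  module

theorem exists_isCuspForm {γ δ : ℝ → E} {w : ℝ → ℝ} {a : ℝ} (hw : ContDiff ℝ ∞ w)
    (hδ : ContDiff ℝ ∞ δ) (hγ : ∀ᶠ v in 𝓝 a, HasDerivAt γ (w v • δ v) v) (hw0 : w a = 0)
    (hw1 : deriv w a ≠ 0) (hδ1 : deriv δ a = 0) :
    ∃ (σ : ℝ → ℝ) (F H : ℝ → E) (κ : ℝ), IsCuspForm γ a σ F H ∧
      deriv F 0 = (deriv w a / 2) • δ a ∧ κ ≠ 0 ∧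
      H 0 = κ • deriv (fun v => (deriv w v)⁻¹ • deriv (deriv δ) v) a := by
  obtain ⟨σ, hσ, hσa, hwσ⟩ := exists_isLocalDiffeoAt_eq_mul_deriv hw hw0 hw1
  obtain ⟨ψ, hψ, hδψ⟩ := hσ.exists_contDiff_comp_eq hδ
  have hψ1 : deriv ψ 0 = 0 := by
    have h := (hψ.differentiable (by simp) (σ a)).hasDerivAt.scomp a
      hσ.differentiableAt.hasDerivAt
    rw [EventuallyEq.deriv_eq hδψ] at hδ1
    have h0 := h.deriv.symm.trans hδ1
    rw [hσa] at h0
    exact (smul_eq_zero.1 h0).resolve_left hσ.deriv_ne_zero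
  obtain ⟨A, D, hA, hD, hAD, hD0⟩ := exists_eq_comp_sq_add_pow_three_smul hψ hψ1
  obtain ⟨F, H, hF, hH, hF0, hF1, hH0, hFH⟩ := exists_hasDerivAt_comp_sq_add_pow_five_smul
    (hA.const_smul (deriv w a / 2)) (hD.const_smul (deriv w a / 2)) (γ a)
  have hγ_eq : γ =ᶠ[𝓝 a] fun v => F (σ v ^ 2) + σ v ^ 5 • H (σ v ^ 2) := by
    refine eventuallyEq_of_eventually_hasDerivAt hγ ?_ (by simp [hσa, hF0])
    filter_upwards [hδψ, hwσ, hσ.eventually_contDiffAt] with v hδv hwv hσv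
    refine ((hFH (σ v)).scomp v (hσv.differentiableAt (by simp)).hasDerivAt).congr_deriv ?_
    rw [hδv, hwv, hAD]
    module
  have hA0 : A 0 = δ a := by simpa [hAD, hσa] using hδψ.self_of_nhds.symm
  refine ⟨σ, F, H, deriv w a ^ 2 / (30 * deriv σ a), ⟨hσ, hσa, hF, hH, hγ_eq⟩, hA0 ▸ hF1,
    div_ne_zero (pow_ne_zero 2 hw1) (mul_ne_zero (by norm_num) hσ.deriv_ne_zero), ?_⟩
  rw [hσ.deriv_inv_smul_deriv_deriv hσa hw hw1 hwσ hψ hψ1 hδψ, hH0, hD0]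
  have := hσ.deriv_ne_zero
  simp only [smul_smul]
  congr 1
  field_simp
  norm_num

end Cusp

/-! ### Recognition of the `(2,5)`-cuspidal edge among translation surfaces -/

theorem hasDerivAt_comp_mk_left {f : R2 → R3} {p : R2} (hf : DifferentiableAt ℝ f p) :
    HasDerivAt (fun v => f (p.1, v)) (pv f p) p.2 :=
  HasFDerivAt.comp_hasDerivAt (l := f) p.2 hf.hasFDerivAt
    ((hasDerivAt_const p.2 p.1).prodMk (hasDerivAt_id p.2))

theorem hasDerivAt_comp_mk_right {f : R2 → R3} {p : R2} (hf : DifferentiableAt ℝ f p) :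
    HasDerivAt (fun u => f (u, p.2)) (pu f p) p.1 :=
  HasFDerivAt.comp_hasDerivAt (l := f) p.1 hf.hasFDerivAt
    ((hasDerivAt_id p.1).prodMk (hasDerivAt_const p.1 p.2))

theorem eq_zero_of_det3_ne_zero {a b c : R3} (h : det3 a b c ≠ 0) {x y z : ℝ}
    (hxyz : x • a + y • b + z • c = 0) : x = 0 ∧ y = 0 ∧ z = 0 := by
  obtain ⟨h1, h2, h3⟩ : x * a.1 + y * b.1 + z * c.1 = 0 ∧
      x * a.2.1 + y * b.2.1 + z * c.2.1 = 0 ∧ x * a.2.2 + y * b.2.2 + z * c.2.2 = 0 := by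
    simpa [Prod.ext_iff] using hxyz
  simp only [det3] at h
  refine ⟨?_, ?_, ?_⟩ <;> refine (mul_eq_zero.1 ?_).resolve_right h
  · linear_combination (b.2.1 * c.2.2 - b.2.2 * c.2.1) * h1 -
      (b.1 * c.2.2 - b.2.2 * c.1) * h2 + (b.1 * c.2.1 - b.2.1 * c.1) * h3
  · linear_combination -(a.2.1 * c.2.2 - a.2.2 * c.2.1) * h1 +
      (a.1 * c.2.2 - a.2.2 * c.1) * h2 - (a.1 * c.2.1 - a.2.1 * c.1) * h3
  · linear_combination (a.2.1 * b.2.2 - a.2.2 * b.2.1) * h1 -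
      (a.1 * b.2.2 - a.2.2 * b.1) * h2 + (a.1 * b.2.1 - a.2.1 * b.1) * h3

theorem aEquiv_of_eventuallyEq_comp {f₁ f₂ : R2 → R3} {p₁ p₂ : R2} {Φ : R2 → R2} {Θ : R3 → R3}
    (hΦ : IsLocalDiffeoAt Φ p₁) (hΦp : Φ p₁ = p₂) (hΘ : IsLocalDiffeoAt Θ (f₂ p₂))
    (hf₂ : ContinuousAt f₂ p₂) (h : ∀ᶠ q in 𝓝 p₁, f₁ q = Θ (f₂ (Φ q))) :
    AEquiv f₁ p₁ f₂ p₂ := by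
  obtain ⟨Ψ, hΨ, hΨp, hleft, -⟩ := hΘ.exists_inverse
  have hfp : f₁ p₁ = Θ (f₂ p₂) := hΦp ▸ h.self_of_nhds
  subst hΦp
  refine ⟨Φ, Ψ, hΦ, rfl, hfp ▸ hΨ, hfp ▸ hΨp, ?_⟩
  filter_upwards [h, (hf₂.comp hΦ.differentiableAt.continuousAt).eventually hleft] with q hq hΨq
  rw [hq]
  exact hΨq

theorem isLocalDiffeoAt_sub_const (c : ℝ) : IsLocalDiffeoAt (fun x : ℝ => x - c) c :=
  isLocalDiffeoAt_of_hasDerivAt (Eventually.of_forall fun _ => contDiffAt_id.sub contDiffAt_const)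
    ((hasDerivAt_id c).sub_const c) one_ne_zero

theorem isLocalDiffeoAt_add_add_smul {g F H : ℝ → R3} {g' : R3} (hg : ContDiff ℝ ∞ g)
    (hg' : HasDerivAt g g' 0) (hF : ContDiff ℝ ∞ F) (hH : ContDiff ℝ ∞ H)
    (hdet : det3 g' (deriv F 0) (H 0) ≠ 0) :
    IsLocalDiffeoAt (fun q : R3 => g q.1 + F q.2.1 + q.2.2 • H q.2.1) 0 := by
  have hF' := (hF.differentiable (by simp) 0).hasDerivAt
  have hH' := (hH.differentiable (by simp) 0).hasDerivAt
  have h_snd : HasFDerivAt (fun q : R3 => q.2) (.snd ℝ ℝ (ℝ × ℝ)) 0 := hasFDerivAt_snd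
  have h_deriv := ((hg'.hasFDerivAt.comp (0 : R3) hasFDerivAt_fst).add
    (hF'.hasFDerivAt.comp (0 : R3) h_snd.fst)).add
    (h_snd.snd.smul (hH'.hasFDerivAt.comp (0 : R3) h_snd.fst))
  refine isLocalDiffeoAt_of_injective (Eventually.of_forall fun q => ContDiff.contDiffAt
    (by fun_prop)) h_deriv ((injective_iff_map_eq_zero _).2 ?_)
  rintro ⟨x, y, z⟩ hxyz
  obtain ⟨rfl, rfl, rfl⟩ := eq_zero_of_det3_ne_zero hdet (x := x) (y := y) (z := z)
    (by simpa using hxyz)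
  rfl

theorem IsCuspForm.aEquiv_fCE25 {f : R2 → R3} {p : R2} {σ : ℝ → ℝ} {F H : ℝ → R3}
    (h : IsCuspForm (fun v => f (p.1, v)) p.2 σ F H) (hf : ContDiff ℝ ∞ f)
    (hf_add : ∀ u v, f (u, v) = f (u, p.2) + f (p.1, v) - f p)
    (hdet : det3 (pu f p) (deriv F 0) (H 0) ≠ 0) : AEquiv f p fCE25 (0, 0) := by
  have hg : ContDiff ℝ ∞ fun x => f (x + p.1, p.2) - f p := by fun_prop
  have hg' : HasDerivAt (fun x => f (x + p.1, p.2) - f p) (pu f p) 0 := by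
    have hpu := hasDerivAt_comp_mk_right (hf.differentiable (by simp) p)
    rw [← zero_add p.1] at hpu
    exact (hpu.comp_add_const 0 p.1).sub_const _
  refine aEquiv_of_eventuallyEq_comp ((isLocalDiffeoAt_sub_const p.1).prodMap h.isLocalDiffeoAt)
    (Prod.ext (sub_self _) h.map_eq_zero)
    (Θ := fun q => (f (q.1 + p.1, p.2) - f p) + F q.2.1 + q.2.2 • H q.2.1) ?_
    (by unfold fCE25; fun_prop) ?_
  · rw [show fCE25 (0, 0) = 0 by simp [fCE25, Prod.ext_iff]]
    exact isLocalDiffeoAt_add_add_smul hg hg' h.contDiff_even h.contDiff_odd hdet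
  · filter_upwards [continuousAt_snd.eventually h.eventually_eq] with q hq
    rw [show f q = f (q.1, q.2) from rfl, hf_add, hq]
    simp only [fCE25, Prod.map_fst, Prod.map_snd, sub_add_cancel]
    abel

theorem eq_zero_of_pow_five_sub_isLittleO {V : ℝ → ℝ} {κ : ℝ} (hV : HasDerivAt V κ 0)
    (hV0 : V 0 = 0) (h : (fun s => V s ^ 5 - V (-s) ^ 5) =o[𝓝 0] fun s : ℝ => s ^ 5) :
    κ = 0 := by
  have hV_neg : HasDerivAt (fun s => V (-s)) (-κ) 0 := by
    rw [← neg_zero] at hV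
    exact (hV.comp 0 (hasDerivAt_neg (0 : ℝ))).congr_deriv (mul_neg_one κ)
  have h_pos : Tendsto (fun s => s⁻¹ * V s) (𝓝[≠] 0) (𝓝 κ) := by
    simpa [hV0] using hV.tendsto_slope_zero
  have h_neg : Tendsto (fun s => s⁻¹ * V (-s)) (𝓝[≠] 0) (𝓝 (-κ)) := by
    simpa [hV0] using hV_neg.tendsto_slope_zero
  have h_quot := h.tendsto_div_nhds_zero.mono_left (nhdsWithin_le_nhds (s := {0}ᶜ))
  have h_eq : κ ^ 5 - (-κ) ^ 5 = 0 := tendsto_nhds_unique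
    ((h_pos.pow 5).sub (h_neg.pow 5)) (h_quot.congr fun s => by ring)
  exact pow_eq_zero_iff (n := 5) (by norm_num) |>.1 (by linear_combination h_eq / 2)

theorem isLittleO_comp_sub_comp_of_contDiffAt {α E F : Type*} [NormedAddCommGroup E]
    [NormedSpace ℝ E] [NormedAddCommGroup F] [NormedSpace ℝ F] {Ψ : E → F} {x : E}
    (hΨ : ContDiffAt ℝ 1 Ψ x) {l : Filter α} {b c : α → E} {r : α → ℝ} (hb : Tendsto b l (𝓝 x))
    (hc : Tendsto c l (𝓝 x)) (h : (fun s => b s - c s) =o[l] r) :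
    (fun s => Ψ (b s) - Ψ (c s)) =o[l] r := by
  obtain ⟨K, t, ht, hK⟩ := hΨ.exists_lipschitzOnWith
  refine Asymptotics.IsBigO.trans_isLittleO (.of_bound K ?_) h
  filter_upwards [hb.eventually_mem ht, hc.eventually_mem ht] with s hbs hcs
  simpa only [dist_eq_norm] using hK.dist_le_mul _ hbs _ hcs

theorem not_aEquiv_fCE25_of_isLittleO {f : R2 → R3} {p : R2} {ℓ : ℝ → R2} {ℓ' : R2}
    (hℓ0 : ℓ 0 = p) (hℓ : HasDerivAt ℓ ℓ' 0) (hℓ' : ℓ' ≠ 0)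
    (hfℓ : HasDerivAt (fun s => f (ℓ s)) 0 0)
    (h_odd : (fun s => f (ℓ s) - f (ℓ (-s))) =o[𝓝 0] fun s : ℝ => s ^ 5) :
    ¬ AEquiv f p fCE25 (0, 0) := by
  -- With `(x, y) = Φ ∘ ℓ`, the first component of `fCE25` gives `x' = 0` at `0`, and the odd part
  -- of the last one gives `y' = 0`.
  subst hℓ0
  rintro ⟨Φ, Ψ, hΦ, hΦp, hΨ, -, h_eq⟩
  have h_neg : Tendsto (fun s : ℝ => -s) (𝓝 0) (𝓝 0) := by
    simpa using (continuous_neg (G := ℝ)).tendsto 0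
  have h_curve : ∀ᶠ s in 𝓝 0, Ψ (f (ℓ s)) = fCE25 (Φ (ℓ s)) := hℓ.continuousAt.eventually h_eq
  have hΦℓ : HasDerivAt (fun s => Φ (ℓ s)) (fderiv ℝ Φ (ℓ 0) ℓ') 0 :=
    hΦ.differentiableAt.hasFDerivAt.comp_hasDerivAt (0 : ℝ) hℓ
  have h_image : HasDerivAt (fun s => fCE25 (Φ (ℓ s))) 0 0 := by
    have h := hΨ.differentiableAt.hasFDerivAt.comp_hasDerivAt (0 : ℝ) hfℓ
    rw [map_zero] at h
    exact h.congr_of_eventuallyEq (h_curve.mono fun s hs => hs.symm)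
  have h_image_odd := isLittleO_comp_sub_comp_of_contDiffAt (contDiffAt_infty.1 hΨ.contDiffAt 1)
    hfℓ.continuousAt.tendsto (hfℓ.continuousAt.tendsto.comp h_neg) h_odd
  have h_snd : (fun s => (Φ (ℓ s)).2 ^ 5 - (Φ (ℓ (-s))).2 ^ 5) =o[𝓝 0] fun s : ℝ => s ^ 5 := by
    refine (Asymptotics.IsBigO.of_bound 1 ?_).trans_isLittleO h_image_odd
    filter_upwards [h_curve, h_neg.eventually h_curve] with s hs hs_neg
    rw [Function.comp_apply, hs, hs_neg, one_mul]
    let X := fCE25 (Φ (ℓ s)) - fCE25 (Φ (ℓ (-s)))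
    exact (norm_snd_le X.2).trans (norm_snd_le X)
  have h_fst' : (fderiv ℝ Φ (ℓ 0) ℓ').1 = 0 :=
    (hasFDerivAt_fst.comp_hasDerivAt (0 : ℝ) hΦℓ).unique
      ((ContinuousLinearMap.fst ℝ ℝ (ℝ × ℝ)).hasFDerivAt.comp_hasDerivAt (0 : ℝ) h_image)
  have h_snd' : (fderiv ℝ Φ (ℓ 0) ℓ').2 = 0 := eq_zero_of_pow_five_sub_isLittleO
    (hasFDerivAt_snd.comp_hasDerivAt (0 : ℝ) hΦℓ) (congrArg Prod.snd hΦp) h_snd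
  rw [show fderiv ℝ Φ (ℓ 0) ℓ' = 0 from Prod.ext h_fst' h_snd'] at hΦℓ
  exact hℓ' (hΦ.eq_zero_of_hasDerivAt hℓ hΦℓ)

theorem IsCuspForm.not_aEquiv_fCE25 {f : R2 → R3} {p : R2} {σ : ℝ → ℝ} {F H : ℝ → R3}
    (h : IsCuspForm (fun v => f (p.1, v)) p.2 σ F H) (hf : DifferentiableAt ℝ f p)
    (hpv : pv f p = 0) (hH : H 0 = 0) : ¬ AEquiv f p fCE25 (0, 0) := by
  obtain ⟨τ, hτ, hτ0, -, hστ⟩ := h.isLocalDiffeoAt.exists_inverse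
  rw [h.map_eq_zero] at hτ hτ0 hστ
  have hτ' := hτ.differentiableAt.hasDerivAt
  have hℓ : HasDerivAt (fun s => (p.1, τ s)) (0, deriv τ 0) 0 := (hasDerivAt_const _ _).prodMk hτ'
  refine not_aEquiv_fCE25_of_isLittleO (by rw [hτ0]) hℓ
    (fun h0 => hτ.deriv_ne_zero (congrArg Prod.snd h0)) ?_ ?_
  · have hfp := hasDerivAt_comp_mk_left hf
    rw [hpv, ← hτ0] at hfp
    exact (hfp.scomp (0 : ℝ) hτ').congr_deriv (smul_zero _)
  · have h_neg : Tendsto (fun s : ℝ => -s) (𝓝 0) (𝓝 0) := by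
      simpa using (continuous_neg (G := ℝ)).tendsto 0
    have h_curve := ((hτ0 ▸ hτ'.continuousAt.tendsto : Tendsto τ (𝓝 0) (𝓝 p.2)).eventually
      h.eventually_eq).and hστ
    have h_odd : ∀ᶠ s in 𝓝 0, f (p.1, τ s) - f (p.1, τ (-s)) = s ^ 5 • (2 : ℝ) • H (s ^ 2) := by
      filter_upwards [h_curve, h_neg.eventually h_curve] with s hs hs_neg
      rw [hs.1, hs_neg.1, hs.2, hs_neg.2, neg_sq]
      module
    have hH_zero : Tendsto (fun s => (2 : ℝ) • H (s ^ 2)) (𝓝 0) (𝓝 0) := by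
      have hH_cont := h.contDiff_odd.continuous
      have h_cont : Continuous fun s => (2 : ℝ) • H (s ^ 2) := by fun_prop
      simpa [hH] using h_cont.tendsto 0
    refine Asymptotics.IsLittleO.congr' ?_ (h_odd.mono fun s hs => hs.symm) EventuallyEq.rfl
    simpa using (Asymptotics.isBigO_refl (fun s : ℝ => s ^ 5) (𝓝 0)).smul_isLittleO
      ((Asymptotics.isLittleO_one_iff ℝ).2 hH_zero)

/-! ### Timelike minimal surfaces -/

/-- The lightlike vector such that `f_v = ω₂ • nullVec g₂`. -/
def nullVec (x : ℝ) : R3 := ((1 + x ^ 2) / 2, (1 - x ^ 2) / 2, -x)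

theorem hasDerivAt_nullVec (x : ℝ) : HasDerivAt nullVec (x, -x, -1) x := by
  have h_sq := hasDerivAt_pow 2 x
  refine (((h_sq.const_add 1).div_const 2).prodMk
    (((h_sq.const_sub 1).div_const 2).prodMk (hasDerivAt_neg x))).congr_deriv ?_
  ext <;> simp [neg_div]

theorem contDiff_nullVec {n : WithTop ℕ∞} : ContDiff ℝ n nullVec := by
  unfold nullVec
  fun_prop

theorem deriv_nullVec_comp {g : ℝ → ℝ} (hg : Differentiable ℝ g) :
    deriv (fun v => nullVec (g v)) = fun v => deriv g v • (g v, -g v, -1) :=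
  funext fun v => ((hasDerivAt_nullVec (g v)).scomp v (hg v).hasDerivAt).deriv

theorem deriv_inv_smul_deriv_deriv_nullVec_comp {g w : ℝ → ℝ} {a : ℝ} (hg : ContDiff ℝ ∞ g)
    (hw : ContDiff ℝ ∞ w) (hw1 : deriv w a ≠ 0) (hg1 : deriv g a = 0) :
    deriv (fun v => (deriv w v)⁻¹ • deriv (deriv fun v => nullVec (g v)) v) a =
      deriv (fun v => deriv (deriv g) v / deriv w v) a • (g a, -g a, -1) := by
  have hg' := contDiff_infty_iff_deriv.1 hg
  have hg'' := contDiff_infty_iff_deriv.1 hg'.2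
  have hg''' := contDiff_infty_iff_deriv.1 hg''.2
  have hw'' := contDiff_infty_iff_deriv.1 (contDiff_infty_iff_deriv.1 hw).2
  have h_tangent (v : ℝ) :
      HasDerivAt (fun v => ((g v, -g v, -1) : R3)) (deriv g v • (1, -1, 0)) v := by
    have h := (hg'.1 v).hasDerivAt
    refine (h.prodMk (h.neg.prodMk (hasDerivAt_const v (-1)))).congr_deriv ?_
    ext <;> simp
  have h_second (v : ℝ) : deriv (deriv fun v => nullVec (g v)) v =
      deriv g v • deriv g v • ((1, -1, 0) : R3) + deriv (deriv g) v • (g v, -g v, -1) := by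
    rw [deriv_nullVec_comp hg'.1]
    exact ((hg''.1 v).hasDerivAt.fun_smul (h_tangent v)).deriv
  have h_quot := ((hg'''.1 a).fun_div (hw''.1 a) hw1).hasDerivAt
  have h_sq := ((hg''.1 a).hasDerivAt.fun_pow 2).fun_div (hw''.1 a).hasDerivAt hw1
  have h_eq : (fun v => (deriv w v)⁻¹ • deriv (deriv fun v => nullVec (g v)) v) = fun v =>
      (deriv g v ^ 2 / deriv w v) • ((1, -1, 0) : R3) +
        (deriv (deriv g) v / deriv w v) • (g v, -g v, -1) := by
    funext v
    rw [h_second]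
    module
  rw [h_eq, ((h_sq.smul_const _).fun_add (h_quot.fun_smul (h_tangent a))).deriv, hg1]
  simp

theorem det3_nullVec_ne_zero {x y c d e : ℝ} (hc : c ≠ 0) (hd : d ≠ 0) (he : e ≠ 0)
    (hxy : x * y ≠ 1) :
    det3 ((-1 - x ^ 2) * c / 2, (1 - x ^ 2) * c / 2, x * c) (d • nullVec y)
      (e • (y, -y, -1)) ≠ 0 := by
  have h : det3 ((-1 - x ^ 2) * c / 2, (1 - x ^ 2) * c / 2, x * c) (d • nullVec y)
      (e • (y, -y, -1)) = c * d * e * (1 - x * y) ^ 2 / 2 := by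
    simp only [det3, nullVec, Prod.smul_mk, smul_eq_mul]
    ring
  rw [h]
  have := sub_ne_zero.2 hxy.symm
  positivity

namespace IsGTMS

variable {f : R2 → R3} {g1 g2 w1 w2 : ℝ → ℝ} (hf : IsGTMS f g1 g2 w1 w2)
include hf

theorem pv_eq (p : R2) : pv f p = w2 p.2 • nullVec (g2 p.2) := by
  rw [hf.deriv_v]
  ext <;> simp [nullVec] <;> ring

theorem differentiable : Differentiable ℝ f := hf.smooth_f.differentiable (by simp)

theorem hasDerivAt_comp_mk (u v : ℝ) :
    HasDerivAt (fun v => f (u, v)) (w2 v • nullVec (g2 v)) v :=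
  hf.pv_eq (u, v) ▸ hasDerivAt_comp_mk_left (hf.differentiable (u, v))

theorem eq_add_sub (p : R2) (u v : ℝ) : f (u, v) = f (u, p.2) + f (p.1, v) - f p := by
  have h_deriv (v : ℝ) : HasDerivAt (fun v => f (u, v) - f (p.1, v)) 0 v := by
    simpa using (hf.hasDerivAt_comp_mk u v).fun_sub (hf.hasDerivAt_comp_mk p.1 v)
  have h := is_const_of_deriv_eq_zero (fun v => (h_deriv v).differentiableAt)
    (fun v => (h_deriv v).deriv) v p.2
  rw [sub_eq_iff_eq_add] at h
  rw [h]
  abel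

end IsGTMS

theorem gtmsNormal_radicand_pos (x y : ℝ) : 0 < (1 - x * y) ^ 2 + 2 * (x + y) ^ 2 := by
  rw [show (1 - x * y) ^ 2 + 2 * (x + y) ^ 2 = (1 + x ^ 2) * (1 + y ^ 2) + (x + y) ^ 2 by ring]
  positivity

theorem differentiableAt_gtmsNormal {g1 g2 : ℝ → ℝ} {p : R2} (hg1 : DifferentiableAt ℝ g1 p.1)
    (hg2 : DifferentiableAt ℝ g2 p.2) : DifferentiableAt ℝ (gtmsNormal g1 g2) p := by
  have h_pos := gtmsNormal_radicand_pos (g1 p.1) (g2 p.2)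
  have h_radicand : DifferentiableAt ℝ
      (fun q : R2 => (1 - g1 q.1 * g2 q.2) ^ 2 + 2 * (g1 q.1 + g2 q.2) ^ 2) p := by fun_prop
  exact ((h_radicand.sqrt h_pos.ne').fun_inv (Real.sqrt_pos.2 h_pos).ne').smul (by fun_prop)

theorem pv_gtmsNormal_ne_zero {g1 g2 : ℝ → ℝ} {p : R2} (hg1 : DifferentiableAt ℝ g1 p.1)
    (hg2 : DifferentiableAt ℝ g2 p.2) (hg2' : deriv g2 p.2 ≠ 0) :
    pv (gtmsNormal g1 g2) p ≠ 0 := by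
  intro h0
  let N (v : ℝ) : R3 := (g1 p.1 + g2 v, -g1 p.1 + g2 v, 1 + g1 p.1 * g2 v)
  let r (v : ℝ) : ℝ := √((1 - g1 p.1 * g2 v) ^ 2 + 2 * (g1 p.1 + g2 v) ^ 2)
  have hr_pos (v : ℝ) : 0 < r v := Real.sqrt_pos.2 (gtmsNormal_radicand_pos _ _)
  have hr : DifferentiableAt ℝ r p.2 :=
    DifferentiableAt.sqrt (by fun_prop) (gtmsNormal_radicand_pos _ _).ne'
  have hN_eq : N = fun v => r v • gtmsNormal g1 g2 (p.1, v) :=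
    funext fun v => (smul_inv_smul₀ (hr_pos v).ne' (N v)).symm
  have hN : HasDerivAt N (deriv g2 p.2, deriv g2 p.2, g1 p.1 * deriv g2 p.2) p.2 := by
    have h := hg2.hasDerivAt
    exact (h.const_add _).prodMk ((h.const_add _).prodMk ((h.const_mul _).const_add _))
  have hn := hasDerivAt_comp_mk_left (differentiableAt_gtmsNormal hg1 hg2)
  rw [h0] at hn
  obtain ⟨k, hk⟩ : ∃ k : ℝ, (deriv g2 p.2, deriv g2 p.2, g1 p.1 * deriv g2 p.2) = k • N p.2 := by
    refine ⟨deriv r p.2 * (r p.2)⁻¹, (hN.unique (hN_eq ▸ hr.hasDerivAt.fun_smul hn)).trans ?_⟩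
    rw [smul_zero, zero_add, mul_smul]
    rfl
  obtain ⟨hk1, hk2, hk3⟩ : deriv g2 p.2 = k * (g1 p.1 + g2 p.2) ∧
      deriv g2 p.2 = k * (-g1 p.1 + g2 p.2) ∧
      g1 p.1 * deriv g2 p.2 = k * (1 + g1 p.1 * g2 p.2) := by
    simpa [N, Prod.ext_iff] using hk
  have hk_eq : k = g1 p.1 * deriv g2 p.2 := by
    linear_combination -hk3 + g2 p.2 / 2 * (hk1 - hk2)
  have hg1_zero : g1 p.1 = 0 := by
    have h : g1 p.1 ^ 2 * deriv g2 p.2 = 0 := by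
      linear_combination (hk2 - hk1) / 2 - g1 p.1 * hk_eq
    simpa [hg2'] using h
  exact hg2' (by rw [hk1, hk_eq, hg1_zero, zero_mul, zero_mul])

theorem injective_fderiv_prodMk {f ν : R2 → R3} {p : R2} (hf : DifferentiableAt ℝ f p)
    (hν : DifferentiableAt ℝ ν p) (hpu : pu f p ≠ 0) (hpv : pv f p = 0) (hν_pv : pv ν p ≠ 0) :
    Function.Injective (fderiv ℝ (fun q => (f q, ν q)) p) := by
  rw [hf.fderiv_prodMk hν, injective_iff_map_eq_zero]
  rintro ⟨a, b⟩ h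
  have h_basis : ((a, b) : R2) = a • (1, 0) + b • (0, 1) := by simp
  rw [h_basis, ContinuousLinearMap.prod_apply, Prod.mk_eq_zero, map_add, map_smul, map_smul,
    map_add, map_smul, map_smul] at h
  obtain ⟨hfab, hνab⟩ : a • pu f p + b • pv f p = 0 ∧ a • pu ν p + b • pv ν p = 0 := h
  have ha : a = 0 := by simpa [hpv, hpu] using hfab
  have hb : b = 0 := by simpa [ha, hν_pv] using hνab
  rw [ha, hb, Prod.mk_zero_zero]

namespace IsGTMS

variable {f : R2 → R3} {g1 g2 w1 w2 : ℝ → ℝ}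

theorem pu_ne_zero (hf : IsGTMS f g1 g2 w1 w2) {p : R2} (hw1 : w1 p.1 ≠ 0) : pu f p ≠ 0 := by
  intro h
  rw [hf.deriv_u, Prod.mk_eq_zero, Prod.mk_eq_zero] at h
  exact hw1 (by linear_combination h.2.1 - h.1)

theorem deriv_eq_zero_of_not_isFrontAt (hf : IsGTMS f g1 g2 w1 w2) {p : R2} (hw2 : w2 p.2 = 0)
    (hw1 : w1 p.1 ≠ 0) (hnotfront : ¬ IsFrontAt f g1 g2 p) : deriv g2 p.2 = 0 := by
  by_contra hg2'
  have hg1 := hf.smooth_g1.differentiable (by simp) p.1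
  have hg2 := hf.smooth_g2.differentiable (by simp) p.2
  exact hnotfront <| injective_fderiv_prodMk (hf.differentiable p)
    (differentiableAt_gtmsNormal hg1 hg2) (hf.pu_ne_zero hw1)
    (by rw [hf.pv_eq, hw2, zero_smul]) (pv_gtmsNormal_ne_zero hg1 hg2 hg2')

end IsGTMS

/-- criterion for the (2,5)-cuspidal edge at a non-degenerate rank-one
ω-singular point at which the surface is not a front. -/
theorem criterion_25_cuspidal_edge
    (f : R2 → R3) (g1 g2 w1 w2 : ℝ → ℝ) (hf : IsGTMS f g1 g2 w1 w2)
    (p : R2) (hw2 : w2 p.2 = 0) (hrank : RankOne f p)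
    (hnondeg : fderiv ℝ (areaDensity f g1 g2) p ≠ 0)
    (hw1 : w1 p.1 ≠ 0) (hw2v : deriv w2 p.2 ≠ 0) (hg : g1 p.1 * g2 p.2 ≠ 1)
    (hnotfront : ¬ IsFrontAt f g1 g2 p) :
    AEquiv f p fCE25 (0, 0) ↔
      deriv (fun v => deriv (deriv g2) v / deriv w2 v) p.2 ≠ 0 := by
  have hg2' := hf.deriv_eq_zero_of_not_isFrontAt hw2 hw1 hnotfront
  have hg2_diff : Differentiable ℝ g2 := hf.smooth_g2.differentiable (by simp)
  have hδ' : deriv (fun v => nullVec (g2 v)) p.2 = 0 := by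
    simp only [deriv_nullVec_comp hg2_diff, hg2', zero_smul]
  obtain ⟨σ, F, H, κ, h_cusp, hF, hκ, hH⟩ := exists_isCuspForm (a := p.2) hf.smooth_w2
    (contDiff_nullVec.comp hf.smooth_g2) (Eventually.of_forall (hf.hasDerivAt_comp_mk p.1)) hw2
    hw2v hδ'
  rw [Function.comp_def, deriv_inv_smul_deriv_deriv_nullVec_comp hf.smooth_g2 hf.smooth_w2 hw2v
    hg2', smul_smul] at hH
  refine ⟨fun h_equiv h_zero => ?_, fun h_ne => ?_⟩
  · refine h_cusp.not_aEquiv_fCE25 (hf.differentiable p) ?_ ?_ h_equiv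
    · rw [hf.pv_eq, hw2, zero_smul]
    · rw [hH, h_zero, mul_zero, zero_smul]
  · refine h_cusp.aEquiv_fCE25 hf.smooth_f (hf.eq_add_sub p) ?_
    rw [hf.deriv_u, hF, hH]
    exact det3_nullVec_ne_zero hw1 (div_ne_zero hw2v two_ne_zero) (mul_ne_zero hκ h_ne) hg
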